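/- Let d ≥ 3. There exists C < ∞ such that for any r ≥ 1, any x ∈ Z^d with |x| ≥ 10r, any K₁ ⊆ B(3r), any K₂ ⊆ B(x,3r), and any ℓ ≥ 16r², one has Σ_{z ∈ C} P_z(max{T_{K₁}, T_{K₂}} ≤ ℓ) ≤ C·ℓ·cap(K₁)·cap(K₂)·|x|^{2−d}, where C = {z ∈ Z^d : |z| ≥ 4r and |z−x| ≥ 4r}. -/

import Mathlib

open MeasureTheory ENNReal Filter

noncomputable section

abbrev Zd (d : ℕ) := Fin d → ℤ

def supNorm {d : ℕ} (x : Zd d) : ℕ := Finset.univ.sup fun i => (x i).natAbs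

def IsNbr {d : ℕ} (x y : Zd d) : Prop := (∑ i, |x i - y i|) = 1

def stepVec {d : ℕ} (p : Fin d × Bool) : Zd d :=
  fun j => if j = p.1 then (if p.2 then 1 else -1) else 0

def nbrs {d : ℕ} (y : Zd d) : Finset (Zd d) :=
  Finset.univ.image fun p : Fin d × Bool => y + stepVec p

/-- A family of measures which is a simple random walk on `ℤ^d` started at `x`. -/
structure SRW (d : ℕ) where
  P : Zd d → Measure (ℕ → Zd d)
  isProb : ∀ x, IsProbabilityMeasure (P x)
  start : ∀ x, P x {ω | ω 0 = x} = 1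
  nn : ∀ x, P x {ω | ∀ t, IsNbr (ω t) (ω (t+1))} = 1
  cyl : ∀ (x : Zd d) (n : ℕ) (γ : ℕ → Zd d), γ 0 = x →
      (∀ t < n, IsNbr (γ t) (γ (t+1))) →
      P x {ω | ∀ t ≤ n, ω t = γ t} = (((2 * d : ℕ) : ℝ≥0∞))⁻¹ ^ n

def HitBy {d : ℕ} (K : Set (Zd d)) (ℓ : ℕ) : Set (ℕ → Zd d) := {ω | ∃ t ≤ ℓ, ω t ∈ K}

def Hits {d : ℕ} (K : Set (Zd d)) : Set (ℕ → Zd d) := {ω | ∃ t, ω t ∈ K}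

def nPaths (d : ℕ) : ℕ → Zd d → Zd d → ℕ
  | 0, x, y => if x = y then 1 else 0
  | t+1, x, y => ∑ z ∈ nbrs y, nPaths d t x z

def pKer (d t : ℕ) (x y : Zd d) : ℝ≥0∞ := (nPaths d t x y : ℝ≥0∞) / ((2*d : ℕ) : ℝ≥0∞)^t

def green (d : ℕ) (x y : Zd d) : ℝ≥0∞ := ∑' t, pKer d t x y

def nAvoid {d : ℕ} (K : Finset (Zd d)) : ℕ → Zd d → ℕ
  | 0, _ => 1
  | t+1, x => ∑ z ∈ (nbrs x).filter (fun z => z ∉ K), nAvoid K t z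

def escProb {d : ℕ} (K : Finset (Zd d)) (x : Zd d) : ℝ≥0∞ :=
  ⨅ n, (nAvoid K n x : ℝ≥0∞) / ((2*d : ℕ) : ℝ≥0∞)^n

def cap {d : ℕ} (K : Finset (Zd d)) : ℝ≥0∞ := ∑ x ∈ K, escProb K x

def ConnIn {d : ℕ} (S : Set (Zd d)) (x y : Zd d) : Prop :=
  ∃ (n : ℕ) (γ : ℕ → Zd d), γ 0 = x ∧ γ n = y ∧ (∀ t < n, IsNbr (γ t) (γ (t+1))) ∧ ∀ t ≤ n, γ t ∈ S

def PercSet {d : ℕ} (S : Set (Zd d)) : Prop := ∃ x ∈ S, {y | ConnIn S x y}.Infinite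

def IsAnimal {d : ℕ} (H : Finset (Zd d)) : Prop :=
  (0 : Zd d) ∈ H ∧ ∀ x ∈ H, ∀ y ∈ H, ConnIn (H : Set (Zd d)) x y

abbrev Animal (d : ℕ) := {H : Finset (Zd d) // IsAnimal H}

def zooTrace {d : ℕ} {Ω : Type*} (N : Zd d × Animal d → Ω → ℕ) (ω : Ω) : Set (Zd d) :=
  {z | ∃ p : Zd d × Animal d, 1 ≤ N p ω ∧ z - p.1 ∈ p.2.1}

def poissonProb (lam : ℝ) (k : ℕ) : ℝ≥0∞ :=
  ENNReal.ofReal (Real.exp (-lam) * lam ^ k / (Nat.factorial k))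

def cluster {d : ℕ} (S : Set (Zd d)) (x : Zd d) : Set (Zd d) := {y | x ∈ S ∧ ConnIn S x y}

def closF {d : ℕ} (H : Finset (Zd d)) : Finset (Zd d) := H ∪ H.biUnion nbrs


abbrev Worm (d : ℕ) := Σ n : ℕ, (Zd d × (Fin n → Fin d × Bool))

def wormLen {d : ℕ} (w : Worm d) : ℕ := w.1 + 1

def IsBernoulliSite {d : ℕ} (P : Measure (Zd d → Bool)) (p : ℝ≥0∞) : Prop :=
  ∀ A B : Finset (Zd d), Disjoint A B →
    P {η | (∀ a ∈ A, η a = true) ∧ ∀ b ∈ B, η b = false} = p ^ A.card * (1 - p) ^ B.card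

/-- The critical probability of Bernoulli site percolation on `ℤ^d`. -/
def pcSite (d : ℕ) : ℝ≥0∞ :=
  sInf {p | ∀ P : Measure (Zd d → Bool), IsProbabilityMeasure P → IsBernoulliSite P p →
    P {η | PercSet {x | η x = true}} = 1}

open Classical in
/-- The Grimmett–Marstrand exploration process: given an ordering `emb` of the (directed)
nearest-neighbour edges and outcomes `b t`, produce the pair (good set, bad set) at step `t`. -/
def explore {d : ℕ} (emb : (Zd d × Zd d) ↪ ℕ) (b : ℕ → Bool) : ℕ → Finset (Zd d) × Finset (Zd d)
  | 0 => if b 0 then ({0}, ∅) else (∅, {0})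
  | t+1 =>
    let G := (explore emb b t).1
    let B := (explore emb b t).2
    let cand : Finset (Zd d × Zd d) :=
      G.biUnion fun u => ((nbrs u).filter fun w => w ∉ G ∧ w ∉ B).image fun w => (u, w)
    if h : cand.Nonempty then
      let e := (Finset.exists_min_image cand (fun p => emb p) h).choose
      if b (t+1) then (insert e.2 G, B) else (G, insert e.2 B)
    else (G, B)

/-- Mutual Dirichlet energy of two measures on `ℤ^d` w.r.t. the random-walk Green function. -/
def energy (d : ℕ) (μ₁ μ₂ : Zd d → ℝ≥0∞) : ℝ≥0∞ :=
  ∑' x, ∑' y, green d x y * μ₁ x * μ₂ y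

/-! ### Analysis: a superharmonic function -/

lemma aux_convex {a : ℝ} (ha : 0 < a) (F F' F'' : ℝ → ℝ) (h0 : F 0 = 0) (h0' : F' 0 = 0)
    (hF : ∀ v, |v| < a → HasDerivAt F (F' v) v) (hF' : ∀ v, |v| < a → HasDerivAt F' (F'' v) v)
    (hpos : ∀ v, |v| < a → 0 ≤ F'' v) : ∀ v, 0 ≤ v → v < a → 0 ≤ F v := by
  have key : ∀ (f f' : ℝ → ℝ), f 0 = 0 → (∀ v, |v| < a → HasDerivAt f (f' v) v) →
      (∀ v, 0 ≤ v → v < a → 0 ≤ f' v) → ∀ v, 0 ≤ v → v < a → 0 ≤ f v := by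
    intro f f' hf0 hf hf' v hv hva
    have hm : MonotoneOn f (Set.Ico 0 a) := by
      apply monotoneOn_of_deriv_nonneg (convex_Ico 0 a)
      · intro y hy
        exact (hf y (by rw [abs_of_nonneg hy.1]; exact hy.2)).continuousAt.continuousWithinAt
      · intro y hy
        rw [interior_Ico] at hy
        exact (hf y (by rw [abs_of_nonneg hy.1.le]; exact hy.2)).differentiableAt.differentiableWithinAt
      · intro y hy
        rw [interior_Ico] at hy
        rw [(hf y (by rw [abs_of_nonneg hy.1.le]; exact hy.2)).deriv]
        exact hf' y hy.1.le hy.2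
    have := hm (Set.mem_Ico.2 ⟨le_refl 0, ha⟩) (Set.mem_Ico.2 ⟨hv, hva⟩) hv
    rwa [hf0] at this
  apply key F F' h0 hF
  apply key F' F'' h0' hF'
  intro v hv hva
  exact hpos v (by rwa [abs_of_nonneg hv])

lemma hasDeriv_plus (q v : ℝ) (hv : |v| < 3/4) :
    HasDerivAt (fun v : ℝ => (1+v)^(-q)) (-q * (1+v)^(-(q+1))) v := by
  have hv' := abs_lt.1 hv
  have h := ((hasDerivAt_id' v).const_add 1).rpow_const (p := -q) (Or.inl (by simp; linarith))
  convert h using 1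
  rw [show -(q+1) = -q-1 by ring]; ring_nf

lemma hasDeriv_minus (q v : ℝ) (hv : |v| < 3/4) :
    HasDerivAt (fun v : ℝ => (1-v)^(-q)) (q * (1-v)^(-(q+1))) v := by
  have hv' := abs_lt.1 hv
  have h := ((hasDerivAt_id' v).const_sub 1).rpow_const (p := -q) (Or.inl (by simp; linarith))
  convert h using 1
  rw [show -(q+1) = -q-1 by ring]; ring_nf

lemma taylor2 (q : ℝ) (hq : 0 < q) : ∃ M : ℝ, 0 < M ∧ ∀ v : ℝ, |v| < 3/4 →
    (1+v)^(-q) + (1-v)^(-q) ≤ 2 + M * v^2 := by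
  refine ⟨q*(q+1)*(4:ℝ)^(q+2), by positivity, ?_⟩
  have main : ∀ v : ℝ, 0 ≤ v → v < 3/4 →
      0 ≤ 2 + (q*(q+1)*(4:ℝ)^(q+2)) * v^2 - ((1+v)^(-q) + (1-v)^(-q)) := by
    apply aux_convex (a := 3/4) (by norm_num) (fun v => 2 + (q*(q+1)*(4:ℝ)^(q+2)) * v^2 - ((1+v)^(-q) + (1-v)^(-q)))
      (fun v => (q*(q+1)*(4:ℝ)^(q+2)) * (2*v) - (-q * (1+v)^(-(q+1)) + q * (1-v)^(-(q+1))))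
      (fun v => (q*(q+1)*(4:ℝ)^(q+2)) * 2 - (-q * (-(q+1) * (1+v)^(-(q+1+1))) + q * ((q+1) * (1-v)^(-(q+1+1)))))
    · simp; norm_num
    · simp
    · intro v hv
      have := ((((hasDerivAt_pow 2 v).const_mul (q*(q+1)*(4:ℝ)^(q+2))).const_add 2)).sub
        ((hasDeriv_plus q v hv).add (hasDeriv_minus q v hv))
      exact this.congr_deriv (by norm_num)
    · intro v hv
      have := ((((hasDerivAt_id' v).const_mul 2).const_mul (q*(q+1)*(4:ℝ)^(q+2)))).sub
        (((hasDeriv_plus (q+1) v hv).const_mul (-q)).add ((hasDeriv_minus (q+1) v hv).const_mul q))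
      exact this.congr_deriv (by norm_num)
    · intro v hv
      have hv' := abs_lt.1 hv
      have e : ∀ y : ℝ, 1/4 ≤ y → y^(-(q+1+1)) ≤ (4:ℝ)^(q+2) := by
        intro y hy
        have := Real.rpow_le_rpow_of_nonpos (by norm_num : (0:ℝ) < 1/4) hy (by linarith : -(q+1+1) ≤ 0)
        refine this.trans (le_of_eq ?_)
        rw [one_div, Real.inv_rpow (by norm_num), ← Real.rpow_neg (by norm_num)]
        congr 1; ring
      have e1 := e (1+v) (by linarith)
      have e2 := e (1-v) (by linarith)
      have := mul_le_mul_of_nonneg_left (add_le_add e1 e2) (by positivity : 0 ≤ q*(q+1))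
      nlinarith
  intro v hv
  rcases le_total 0 v with h | h
  · have := main v h (by rwa [abs_of_nonneg h] at hv); linarith
  · have := main (-v) (by linarith) (by rwa [abs_of_nonpos h] at hv)
    simp only [sub_neg_eq_add, neg_sq] at this
    rw [← sub_eq_add_neg] at this
    linarith

lemma taylor4 (q : ℝ) (hq : 0 < q) : ∃ M : ℝ, 0 < M ∧ ∀ v : ℝ, |v| < 3/4 →
    (1+v)^(-q) + (1-v)^(-q) ≤ 2 + q*(q+1)*v^2 + M * v^4 := by
  obtain ⟨M, hM, hM2⟩ := taylor2 (q+1+1) (by linarith)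
  refine ⟨q*(q+1)*M, by positivity, ?_⟩
  have main : ∀ v : ℝ, 0 ≤ v → v < 3/4 →
      0 ≤ 2 + q*(q+1)*v^2 + (q*(q+1)*M) * v^4 - ((1+v)^(-q) + (1-v)^(-q)) := by
    apply aux_convex (a := 3/4) (by norm_num) (fun v => 2 + q*(q+1)*v^2 + (q*(q+1)*M) * v^4 - ((1+v)^(-q) + (1-v)^(-q)))
      (fun v => q*(q+1)*(2*v) + (q*(q+1)*M) * (4*v^3) - (-q * (1+v)^(-(q+1)) + q * (1-v)^(-(q+1))))
      (fun v => q*(q+1)*2 + (q*(q+1)*M) * (4*(3*v^2)) - (-q * (-(q+1) * (1+v)^(-(q+1+1))) + q * ((q+1) * (1-v)^(-(q+1+1)))))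
    · simp; norm_num
    · simp
    · intro v hv
      have := ((((hasDerivAt_pow 2 v).const_mul (q*(q+1))).const_add 2).add
        ((hasDerivAt_pow 4 v).const_mul (q*(q+1)*M))).sub
        ((hasDeriv_plus q v hv).add (hasDeriv_minus q v hv))
      exact this.congr_deriv (by norm_num)
    · intro v hv
      have := ((((hasDerivAt_id' v).const_mul 2).const_mul (q*(q+1))).add
        ((((hasDerivAt_pow 3 v).const_mul 4)).const_mul (q*(q+1)*M))).sub
        (((hasDeriv_plus (q+1) v hv).const_mul (-q)).add ((hasDeriv_minus (q+1) v hv).const_mul q))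
      exact this.congr_deriv (by norm_num)
    · intro v hv
      have e := hM2 v hv
      have := mul_le_mul_of_nonneg_left e (by positivity : 0 ≤ q*(q+1))
      have h2 : 0 ≤ q*(q+1)*M*v^2 := by positivity
      nlinarith
  intro v hv
  rcases le_total 0 v with h | h
  · have := main v h (by rwa [abs_of_nonneg h] at hv); linarith
  · have := main (-v) (by linarith) (by rwa [abs_of_nonpos h] at hv)
    simp only [sub_neg_eq_add] at this
    rw [← sub_eq_add_neg, neg_sq, show (-v)^4 = v^4 by ring] at this
    linarith

lemma bern (p t : ℝ) (hp : 0 < p) (ht : t < 1) : 1 + p * t ≤ (1 - t)^(-p) := by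
  have h1 : 0 < 1 - t := by linarith
  rw [Real.rpow_def_of_pos h1]
  have h2 := Real.log_le_sub_one_of_pos h1
  have h3 := Real.add_one_le_exp (Real.log (1-t) * -p)
  nlinarith

def sq2 {d : ℕ} (x : Zd d) : ℝ := ∑ i, (x i : ℝ)^2

def hR (d : ℕ) (c : ℝ) (x : Zd d) : ℝ := (sq2 x + c)^(-(((d:ℝ)-2)/2))

lemma sq2_nonneg {d : ℕ} (x : Zd d) : 0 ≤ sq2 x := Finset.sum_nonneg fun _ _ => sq_nonneg _

lemma sq2_step {d : ℕ} (x : Zd d) (p : Fin d × Bool) :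
    sq2 (x + stepVec p) = sq2 x + 1 + (if p.2 then 1 else -1) * (2 * (x p.1 : ℝ)) := by
  have : ∀ j, (((x + stepVec p) j : ℤ) : ℝ)^2 = (x j : ℝ)^2 +
      (if j = p.1 then (1 + (if p.2 then 1 else -1) * (2 * (x p.1 : ℝ))) else 0) := by
    intro j
    by_cases h : j = p.1
    · subst h
      cases hb : p.2 <;> simp [stepVec, hb] <;> ring
    · simp [stepVec, h]
  unfold sq2
  rw [Finset.sum_congr rfl fun j _ => this j, Finset.sum_add_distrib]
  simp; ring

lemma superharm {d : ℕ} (hd : 3 ≤ d) : ∃ c : ℝ, 4 ≤ c ∧ ∀ x : Zd d,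
    ∑ p : Fin d × Bool, hR d c (x + stepVec p) ≤ (2*d) * hR d c x := by
  have hd' : (3:ℝ) ≤ d := by exact_mod_cast hd
  set p : ℝ := ((d:ℝ)-2)/2 with hp
  have hp0 : 0 < p := by rw [hp]; linarith
  obtain ⟨M, hM, hT⟩ := taylor4 p hp0
  refine ⟨4 + 8*M/(d*p), by have : 0 ≤ 8*M/(d*p) := by positivity
                            linarith, ?_⟩
  set c : ℝ := 4 + 8*M/(d*p) with hc
  have hcM : 8*M ≤ d*p*c := by
    have : d*p*c = d*p*4 + 8*M := by rw [hc]; field_simp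
    rw [this]; nlinarith [mul_pos (by linarith : (0:ℝ) < d) hp0]
  have hc4 : 4 ≤ c := by
    have : 0 ≤ 8*M/(d*p) := by positivity
    linarith
  intro x
  have hQ := sq2_nonneg x
  set Q := sq2 x with hQdef
  set s := Q + 1 + c with hs
  have hs0 : 0 < s := by linarith
  have hxi : ∀ i, (x i : ℝ)^2 ≤ Q := fun i =>
    Finset.single_le_sum (f := fun i => (x i : ℝ)^2) (fun _ _ => sq_nonneg _) (Finset.mem_univ i)
  have hv : ∀ i, |2 * (x i : ℝ) / s| < 3/4 := by
    intro i
    rw [abs_div, abs_of_pos hs0, div_lt_iff₀ hs0, abs_mul, abs_of_pos (by norm_num : (0:ℝ) < 2)]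
    have := hxi i
    rw [← sq_abs] at this
    nlinarith [sq_nonneg (|(x i : ℝ)| - 2)]
  have hterm : ∀ i, hR d c (x + stepVec (i, true)) + hR d c (x + stepVec (i, false)) ≤
      s^(-p) * (2 + p*(p+1)*(2 * (x i : ℝ) / s)^2 + M * (2 * (x i : ℝ) / s)^4) := by
    intro i
    have hb := abs_lt.1 (hv i)
    have h1 : hR d c (x + stepVec (i, true)) = s^(-p) * (1 + 2 * (x i : ℝ) / s)^(-p) := by
      rw [← Real.mul_rpow hs0.le (by linarith)]
      unfold hR; rw [sq2_step, ← hQdef]; congr 1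
      field_simp; simp [hs]; ring
    have h2 : hR d c (x + stepVec (i, false)) = s^(-p) * (1 - 2 * (x i : ℝ) / s)^(-p) := by
      rw [← Real.mul_rpow hs0.le (by linarith)]
      unfold hR; rw [sq2_step, ← hQdef]; congr 1
      field_simp; simp [hs]; ring
    rw [h1, h2, ← mul_add]
    exact mul_le_mul_of_nonneg_left (hT _ (hv i)) (by positivity)
  have hsum : ∑ q : Fin d × Bool, hR d c (x + stepVec q) =
      ∑ i, (hR d c (x + stepVec (i, true)) + hR d c (x + stepVec (i, false))) := by
    rw [Fintype.sum_prod_type]; simp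
  rw [hsum]
  have h4 : ∑ i, (x i : ℝ)^4 ≤ s^2 := by
    calc ∑ i, (x i : ℝ)^4 ≤ ∑ i, Q * (x i : ℝ)^2 := by
          apply Finset.sum_le_sum; intro i _
          have := mul_le_mul_of_nonneg_right (hxi i) (sq_nonneg (x i : ℝ))
          nlinarith
      _ = Q * Q := by rw [← Finset.mul_sum]; rfl
      _ ≤ s^2 := by nlinarith
  have h5 : ∑ i, (s^(-p) * (2 + p*(p+1)*(2 * (x i : ℝ) / s)^2 + M * (2 * (x i : ℝ) / s)^4)) =
      s^(-p) * (2*d + 2*d*p*Q/s^2 + 16*M*(∑ i, (x i : ℝ)^4)/s^4) := by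
    rw [← Finset.mul_sum]; congr 1
    rw [Finset.sum_add_distrib, Finset.sum_add_distrib]
    congr 1
    · congr 1
      · simp; ring
      · have : p * (p+1) * 4 = 2*d*p := by rw [hp]; ring
        rw [← this, hQdef]; unfold sq2
        rw [Finset.mul_sum, Finset.sum_div]
        apply Finset.sum_congr rfl; intro i _; ring
    · rw [Finset.mul_sum, Finset.sum_div]
      apply Finset.sum_congr rfl; intro i _; ring
  refine (Finset.sum_le_sum fun i _ => hterm i).trans ?_
  rw [h5]
  have h6 : hR d c x = s^(-p) * (1 - 1/s)^(-p) := by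
    have : 0 ≤ 1 - 1/s := by
      rw [sub_nonneg, div_le_one hs0]; linarith
    rw [← Real.mul_rpow hs0.le this]
    unfold hR; congr 1
    field_simp; rw [hs]; ring
  have h7 := bern p (1/s) hp0 (by rw [div_lt_one hs0]; linarith)
  rw [h6]
  have h8 : 2*d + 2*d*p*Q/s^2 + 16*M*(∑ i, (x i : ℝ)^4)/s^4 ≤ 2*d*(1 + p*(1/s)) := by
    have : 16*M*(∑ i, (x i : ℝ)^4)/s^4 ≤ 16*M/s^2 := by
      rw [div_le_div_iff₀ (by positivity) (by positivity)]
      have := mul_le_mul_of_nonneg_left h4 (by positivity : 0 ≤ 16*M*s^2)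
      nlinarith
    have h9 : 2*d*p*Q/s^2 + 16*M/s^2 ≤ 2*d*p/s := by
      rw [← add_div, div_le_div_iff₀ (by positivity) (by positivity)]
      have h10 : 2*d*p*Q + 16*M ≤ 2*d*p*s := by
        have : 0 ≤ d*p := by positivity
        rw [hs]; nlinarith
      have := mul_le_mul_of_nonneg_right h10 hs0.le
      nlinarith
    have h11 : 2*d*(1 + p*(1/s)) = 2*d + 2*d*p/s := by ring
    rw [h11]; linarith
  have h12 : (0:ℝ) ≤ s^(-p) := by positivity
  calc s^(-p) * (2*d + 2*d*p*Q/s^2 + 16*M*(∑ i, (x i : ℝ)^4)/s^4)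
      ≤ s^(-p) * (2*d*(1-1/s)^(-p)) := by
        apply mul_le_mul_of_nonneg_left _ h12
        exact h8.trans (mul_le_mul_of_nonneg_left h7 (by positivity))
    _ = _ := by ring

/-! ### The averaging operator -/

def Av {d : ℕ} (f : Zd d → ℝ≥0∞) (x : Zd d) : ℝ≥0∞ :=
  ((2 * d : ℕ) : ℝ≥0∞)⁻¹ * ∑ p : Fin d × Bool, f (x + stepVec p)

def kill {d : ℕ} (K : Finset (Zd d)) (f : Zd d → ℝ≥0∞) (x : Zd d) : ℝ≥0∞ :=
  if x ∈ K then 0 else f x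

def onK {d : ℕ} (K : Finset (Zd d)) (f : Zd d → ℝ≥0∞) (x : Zd d) : ℝ≥0∞ :=
  if x ∈ K then f x else 0

def aP {d : ℕ} (K : Finset (Zd d)) : ℕ → Zd d → ℝ≥0∞
  | 0 => fun _ => 1
  | n+1 => Av (kill K (aP K n))

def hitP {d : ℕ} (K : Finset (Zd d)) : ℕ → Zd d → ℝ≥0∞
  | 0 => onK K 1
  | n+1 => fun x => if x ∈ K then 1 else Av (hitP K n) x

def bothP {d : ℕ} (K₁ K₂ : Finset (Zd d)) : ℕ → Zd d → ℝ≥0∞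
  | 0 => fun x => if x ∈ K₁ then hitP K₂ 0 x else if x ∈ K₂ then hitP K₁ 0 x else 0
  | n+1 => fun x => if x ∈ K₁ then hitP K₂ (n+1) x else if x ∈ K₂ then hitP K₁ (n+1) x else
      Av (bothP K₁ K₂ n) x

lemma Av_mono {d : ℕ} {f g : Zd d → ℝ≥0∞} (x : Zd d)
    (h : ∀ p : Fin d × Bool, f (x + stepVec p) ≤ g (x + stepVec p)) : Av f x ≤ Av g x := by
  unfold Av
  gcongr with p
  exact h p

lemma Av_add {d : ℕ} (f g : Zd d → ℝ≥0∞) (x : Zd d) :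
    Av (fun y => f y + g y) x = Av f x + Av g x := by
  unfold Av; rw [Finset.sum_add_distrib, mul_add]

lemma Av_mul {d : ℕ} (a : ℝ≥0∞) (f : Zd d → ℝ≥0∞) (x : Zd d) :
    Av (fun y => a * f y) x = a * Av f x := by
  unfold Av; rw [← Finset.mul_sum, mul_left_comm]

lemma Av_sum {d : ℕ} {ι : Type*} (s : Finset ι) (f : ι → Zd d → ℝ≥0∞) (x : Zd d) :
    Av (fun y => ∑ i ∈ s, f i y) x = ∑ i ∈ s, Av (f i) x := by
  unfold Av; rw [Finset.sum_comm, Finset.mul_sum]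

lemma twod_ne {d : ℕ} (hd : 3 ≤ d) : ((2 * d : ℕ) : ℝ≥0∞) ≠ 0 := by
  have : 2 * d ≠ 0 := by omega
  exact_mod_cast this

lemma Av_const {d : ℕ} (hd : 3 ≤ d) (a : ℝ≥0∞) (x : Zd d) : Av (fun _ => a) x = a := by
  unfold Av
  rw [Finset.sum_const, Finset.card_univ, Fintype.card_prod, Fintype.card_fin, Fintype.card_bool,
    nsmul_eq_mul, mul_comm d 2, ← mul_assoc, ENNReal.inv_mul_cancel (twod_ne hd) (ENNReal.natCast_ne_top _), one_mul]

lemma stepVec_not {d : ℕ} (i : Fin d) (b : Bool) : stepVec (i, !b) = - stepVec (i, b) := by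
  funext j
  cases b <;> by_cases h : j = i <;> simp [stepVec, h]

lemma Av_symm {d : ℕ} (f g : Zd d → ℝ≥0∞) :
    ∑' x, f x * Av g x = ∑' x, Av f x * g x := by
  have h1 : ∀ x, f x * Av g x = ((2 * d : ℕ) : ℝ≥0∞)⁻¹ * ∑ p : Fin d × Bool, f x * g (x + stepVec p) := by
    intro x; unfold Av; rw [mul_left_comm, Finset.mul_sum]
  have h2 : ∀ x, Av f x * g x = ((2 * d : ℕ) : ℝ≥0∞)⁻¹ * ∑ p : Fin d × Bool, f (x + stepVec p) * g x := by
    intro x; unfold Av; rw [mul_assoc, Finset.sum_mul]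
  simp_rw [h1, h2]
  rw [ENNReal.tsum_mul_left, ENNReal.tsum_mul_left]
  congr 1
  rw [Summable.tsum_finsetSum (fun _ _ => ENNReal.summable),
    Summable.tsum_finsetSum (fun _ _ => ENNReal.summable)]
  let e : Fin d × Bool ≃ Fin d × Bool := Equiv.prodCongr (Equiv.refl _) Equiv.boolNot
  rw [← e.sum_comp]
  apply Finset.sum_congr rfl
  rintro ⟨i, b⟩ _
  rw [← (Equiv.addRight (stepVec (i, b))).tsum_eq]
  apply tsum_congr
  intro x
  have : stepVec (e (i, b)) = - stepVec (i, b) := by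
    simp [e, stepVec_not]
  rw [this]
  simp

lemma stepVec_inj {d : ℕ} : Function.Injective (stepVec : Fin d × Bool → Zd d) := by
  rintro ⟨i, b⟩ ⟨j, c⟩ h
  have h1 := congrFun h i
  by_cases hij : i = j
  · subst hij
    cases b <;> cases c <;> simp [stepVec] at h1 ⊢
  · simp [stepVec, hij] at h1
    cases b <;> simp at h1

lemma sum_nbrs {d : ℕ} {M : Type*} [AddCommMonoid M] (f : Zd d → M) (x : Zd d) :
    ∑ z ∈ nbrs x, f z = ∑ p : Fin d × Bool, f (x + stepVec p) := by
  unfold nbrs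
  rw [Finset.sum_image]
  intro a _ b _ h
  exact stepVec_inj (add_left_cancel h)

lemma aP_eq {d : ℕ} (K : Finset (Zd d)) (n : ℕ) (x : Zd d) :
    (nAvoid K n x : ℝ≥0∞) / ((2*d : ℕ) : ℝ≥0∞)^n = aP K n x := by
  induction n generalizing x with
  | zero => simp [nAvoid, aP]
  | succ n ih =>
    have e : ∀ y, kill K (aP K n) y = (if y ∉ K then (nAvoid K n y : ℝ≥0∞) else 0) / ((2*d : ℕ) : ℝ≥0∞)^n := by
      intro y; unfold kill
      by_cases h : y ∈ K <;> simp [h, ← ih]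
    simp only [nAvoid, aP, Av]
    rw [Finset.sum_filter, sum_nbrs]
    simp_rw [e, div_eq_mul_inv]
    rw [← Finset.sum_mul, pow_succ, ENNReal.mul_inv (Or.inr (ENNReal.natCast_ne_top _)) (Or.inl (ENNReal.pow_ne_top (ENNReal.natCast_ne_top _)))]
    push_cast
    ring

lemma aP_anti_succ {d : ℕ} (hd : 3 ≤ d) (K : Finset (Zd d)) (n : ℕ) (x : Zd d) :
    aP K (n+1) x ≤ aP K n x := by
  induction n generalizing x with
  | zero =>
    change Av (kill K (aP K 0)) x ≤ 1
    refine le_trans (Av_mono x fun p => ?_) (Av_const hd 1 x).le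
    unfold kill; split_ifs <;> simp [aP]
  | succ n ih =>
    change Av (kill K (aP K (n+1))) x ≤ Av (kill K (aP K n)) x
    apply Av_mono; intro p
    unfold kill; split_ifs
    · exact le_rfl
    · exact ih _

lemma aP_anti {d : ℕ} (hd : 3 ≤ d) (K : Finset (Zd d)) (x : Zd d) :
    Antitone (fun n => aP K n x) := antitone_nat_of_succ_le fun n => aP_anti_succ hd K n x

lemma esc_eq {d : ℕ} (K : Finset (Zd d)) (x : Zd d) : escProb K x = ⨅ n, aP K n x := by
  unfold escProb; simp_rw [aP_eq]

lemma aP_le_one {d : ℕ} (hd : 3 ≤ d) (K : Finset (Zd d)) (n : ℕ) (x : Zd d) : aP K n x ≤ 1 :=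
  aP_anti hd K x (Nat.zero_le n)

lemma both_le {d : ℕ} (K₁ K₂ : Finset (Zd d)) (α β : ℝ≥0∞)
    (hα : ∀ y ∈ K₁, ∀ n, hitP K₂ n y ≤ α) (hβ : ∀ y ∈ K₂, ∀ n, hitP K₁ n y ≤ β) (n : ℕ) (x : Zd d) :
    bothP K₁ K₂ n x ≤ α * hitP K₁ n x + β * hitP K₂ n x := by
  induction n generalizing x with
  | zero =>
    by_cases h1 : x ∈ K₁
    · have := hα x h1 0
      simp only [bothP, h1, if_true]
      refine this.trans ?_
      simp [hitP, onK, h1]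
    · by_cases h2 : x ∈ K₂
      · have := hβ x h2 0
        simp only [bothP, h1, h2, if_true, if_false]
        refine this.trans ?_
        simp [hitP, onK, h2]
      · simp [bothP, h1, h2]
  | succ n ih =>
    by_cases h1 : x ∈ K₁
    · have := hα x h1 (n+1)
      simp only [bothP, h1, if_true]
      refine this.trans ?_
      simp [hitP, h1]
    · by_cases h2 : x ∈ K₂
      · have := hβ x h2 (n+1)
        simp only [bothP, h1, h2, if_true, if_false]
        refine this.trans ?_
        simp [hitP, h2]
      · simp only [bothP, hitP, h1, h2, if_false]
        rw [← Av_mul, ← Av_mul, ← Av_add]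
        exact Av_mono x fun p => ih _

/-! ### Sum of hitting probabilities -/

def fP {d : ℕ} (K : Finset (Zd d)) : ℕ → Zd d → ℝ≥0∞
  | 0 => onK K 1
  | n+1 => kill K (Av (fP K n))

def gP {d : ℕ} (K : Finset (Zd d)) (φ : Zd d → ℝ≥0∞) : ℕ → Zd d → ℝ≥0∞
  | 0 => φ
  | n+1 => Av (kill K (gP K φ n))

lemma hit_eq_sum {d : ℕ} (K : Finset (Zd d)) (n : ℕ) (x : Zd d) :
    hitP K n x ≤ ∑ k ∈ Finset.range (n+1), fP K k x := by
  induction n generalizing x with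
  | zero => simp [hitP, fP]
  | succ n ih =>
    rw [Finset.sum_range_succ']
    by_cases h : x ∈ K
    · simp [hitP, fP, h, onK]
    · refine le_trans ?_ (le_add_right le_rfl)
      simp only [hitP, fP, kill, h, if_false]
      rw [← Av_sum]
      exact Av_mono x fun p => ih _

lemma kill_symm {d : ℕ} (K : Finset (Zd d)) (f g : Zd d → ℝ≥0∞) :
    ∑' x, f x * kill K g x = ∑' x, kill K f x * g x := by
  apply tsum_congr; intro x; unfold kill; split_ifs <;> simp

lemma dual {d : ℕ} (K : Finset (Zd d)) (φ : Zd d → ℝ≥0∞) (n : ℕ) :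
    ∀ m, ∑' x, gP K φ m x * fP K n x = ∑' x, gP K φ (m+n) x * onK K 1 x := by
  induction n with
  | zero => intro m; simp [fP]
  | succ n ih =>
    intro m
    have : ∑' x, gP K φ m x * fP K (n+1) x = ∑' x, gP K φ (m+1) x * fP K n x := by
      simp only [fP, gP]
      rw [kill_symm, Av_symm]
    rw [this, ih (m+1)]
    congr 2; ext; congr 2; omega

lemma g_le_a {d : ℕ} (K : Finset (Zd d)) (φ : Zd d → ℝ≥0∞) (c : ℝ≥0∞)
    (h : ∀ x m, c * φ x ≤ aP K m x) (n m : ℕ) (x : Zd d) : c * gP K φ n x ≤ aP K (m + n) x := by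
  induction n generalizing x with
  | zero => exact h x m
  | succ n ih =>
    rw [← add_assoc]
    simp only [gP, aP]
    rw [← Av_mul]
    apply Av_mono; intro p
    unfold kill; split_ifs
    · simp
    · exact ih _

lemma sum_hit {d : ℕ} (hd : 3 ≤ d) (K : Finset (Zd d)) (φ : Zd d → ℝ≥0∞) (c : ℝ≥0∞)
    (h : ∀ x m, c * φ x ≤ aP K m x) (ℓ : ℕ) :
    c * ∑' x, φ x * hitP K ℓ x ≤ (ℓ + 1) * cap K := by
  have h1 : ∀ n, c * ∑' x, φ x * fP K n x ≤ cap K := by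
    intro n
    have := dual K φ n 0
    rw [zero_add] at this
    change ∑' x, φ x * fP K n x = _ at this
    rw [this, tsum_eq_sum (s := K) (by intro b hb; simp [onK, hb]), Finset.mul_sum]
    unfold cap
    apply Finset.sum_le_sum
    intro y hy
    simp only [onK, hy, if_true, Pi.one_apply, mul_one]
    rw [esc_eq]
    refine le_iInf fun m => ?_
    exact (g_le_a K φ c h n m y).trans (aP_anti hd K y (Nat.le_add_right m n))
  calc c * ∑' x, φ x * hitP K ℓ x ≤ c * ∑' x, ∑ k ∈ Finset.range (ℓ+1), φ x * fP K k x := by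
        gcongr with x
        rw [← Finset.mul_sum]
        gcongr
        exact hit_eq_sum K ℓ x
    _ = ∑ k ∈ Finset.range (ℓ+1), c * ∑' x, φ x * fP K k x := by
        rw [Summable.tsum_finsetSum (fun _ _ => ENNReal.summable), Finset.mul_sum]
    _ ≤ ∑ k ∈ Finset.range (ℓ+1), cap K := Finset.sum_le_sum fun k _ => h1 k
    _ = (ℓ + 1) * cap K := by simp

/-! ### Last exit decomposition -/

def LP {d : ℕ} (K : Finset (Zd d)) : ℕ → Zd d → ℝ≥0∞
  | 0 => onK K 1
  | n+1 => fun x => onK K (aP K (n+1)) x + Av (LP K n) x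

lemma one_le_L {d : ℕ} (hd : 3 ≤ d) (K : Finset (Zd d)) (n : ℕ) (x : Zd d) :
    1 ≤ kill K (aP K n) x + LP K n x := by
  induction n generalizing x with
  | zero => unfold kill; by_cases h : x ∈ K <;> simp [LP, aP, onK, h]
  | succ n ih =>
    have : kill K (aP K (n+1)) x + LP K (n+1) x = aP K (n+1) x + Av (LP K n) x := by
      unfold kill; by_cases h : x ∈ K <;> simp [LP, onK, h]
    rw [this]
    simp only [aP]
    rw [← Av_add, ← Av_const hd 1 x]
    exact Av_mono x fun p => ih _

lemma hit_le_L {d : ℕ} (hd : 3 ≤ d) (K : Finset (Zd d)) (n : ℕ) (x : Zd d) :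
    hitP K n x ≤ LP K n x := by
  induction n generalizing x with
  | zero => exact le_rfl
  | succ n ih =>
    by_cases h : x ∈ K
    · have := one_le_L hd K (n+1) x
      simpa [kill, h, hitP] using this
    · simp only [hitP, LP, h, if_false]
      refine le_trans ?_ (le_add_left le_rfl)
      exact Av_mono x fun p => ih _

/-- heat kernel `P_y(X_t = w)`. -/
def qP {d : ℕ} (w : Zd d) : ℕ → Zd d → ℝ≥0∞
  | 0 => fun y => if y = w then 1 else 0
  | n+1 => Av (qP w n)

lemma L_eq {d : ℕ} (K : Finset (Zd d)) (n : ℕ) (x : Zd d) :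
    LP K n x = ∑ w ∈ K, ∑ t ∈ Finset.range (n+1), qP w t x * aP K (n - t) w := by
  induction n generalizing x with
  | zero => simp [LP, onK, qP, aP]
  | succ n ih =>
    rw [Finset.sum_congr rfl fun w _ => Finset.sum_range_succ' (fun t => qP w t x * aP K (n + 1 - t) w) (n+1),
      Finset.sum_add_distrib]
    change onK K (aP K (n+1)) x + Av (LP K n) x = _
    refine (add_comm _ _).trans ?_
    congr 1
    · have : LP K n = fun x => ∑ w ∈ K, ∑ t ∈ Finset.range (n+1), aP K (n - t) w * qP w t x := by
        funext x; rw [ih]; simp_rw [mul_comm]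
      rw [this, Av_sum]
      apply Finset.sum_congr rfl; intro w _
      rw [Av_sum]
      apply Finset.sum_congr rfl; intro t _
      rw [Av_mul, mul_comm]
      simp [qP]
    · simp [onK, qP]

lemma hit_mono {d : ℕ} (K : Finset (Zd d)) (x : Zd d) : Monotone fun n => hitP K n x := by
  apply monotone_nat_of_le_succ
  intro n
  induction n generalizing x with
  | zero => by_cases h : x ∈ K <;> simp [hitP, onK, h]
  | succ n ih =>
    by_cases h : x ∈ K
    · simp [hitP, h]
    · have e : ∀ m, hitP K (m+1) x = Av (hitP K m) x := by intro m; simp [hitP, h]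
      rw [e, e]
      exact Av_mono x fun p => ih _

lemma hit_le {d : ℕ} (hd : 3 ≤ d) (K : Finset (Zd d)) (x : Zd d) (n : ℕ)
    (hfin : ∀ w ∈ K, ∑' t, qP w t x ≠ ⊤) :
    hitP K n x ≤ ∑ w ∈ K, (∑' t, qP w t x) * escProb K w := by
  have h1 : ∀ M T, hitP K n x ≤ ∑ w ∈ K, ((∑' t, qP w t x) * aP K M w + ∑' t, qP w (t + T) x) := by
    intro M T
    refine (hit_mono K x (by omega : n ≤ n + M + T)).trans ?_
    refine (hit_le_L hd K _ x).trans ?_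
    rw [L_eq]
    apply Finset.sum_le_sum; intro w _
    rw [show n + M + T + 1 = T + (n + M + 1) by omega, Finset.sum_range_add]
    gcongr
    · rw [← ENNReal.tsum_mul_right]
      refine le_trans (Finset.sum_le_sum fun t ht => ?_) (ENNReal.sum_le_tsum (Finset.range T))
      gcongr
      apply aP_anti hd K w
      have := Finset.mem_range.1 ht
      omega
    · refine le_trans (Finset.sum_le_sum fun t ht => ?_) (ENNReal.sum_le_tsum (Finset.range (n+M+1)))
      rw [add_comm T t]
      exact mul_le_of_le_one_right' (aP_le_one hd K _ w)
  have h2 : ∀ M, hitP K n x ≤ ∑ w ∈ K, (∑' t, qP w t x) * aP K M w := by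
    intro M
    have lim : Tendsto (fun T => ∑ w ∈ K, ((∑' t, qP w t x) * aP K M w + ∑' t, qP w (t + T) x)) atTop
        (nhds (∑ w ∈ K, ((∑' t, qP w t x) * aP K M w + 0))) := by
      apply tendsto_finsetSum
      intro w hw
      exact tendsto_const_nhds.add (ENNReal.tendsto_sum_nat_add _ (hfin w hw))
    simp only [add_zero] at lim
    exact ge_of_tendsto' lim fun T => h1 M T
  have lim : Tendsto (fun M => ∑ w ∈ K, (∑' t, qP w t x) * aP K M w) atTop
      (nhds (∑ w ∈ K, (∑' t, qP w t x) * escProb K w)) := by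
    apply tendsto_finsetSum
    intro w hw
    apply ENNReal.Tendsto.const_mul _ (Or.inr (hfin w hw))
    rw [esc_eq]
    exact tendsto_atTop_iInf (aP_anti hd K w)
  exact ge_of_tendsto' lim h2

/-! ### From the measure to the recursion -/

lemma isNbr_step {d : ℕ} (x : Zd d) (p : Fin d × Bool) : IsNbr x (x + stepVec p) := by
  unfold IsNbr
  rw [Finset.sum_eq_single p.1]
  · cases hb : p.2 <;> simp [stepVec, hb]
  · intro j _ hj; simp [stepVec, hj]
  · simp

lemma exists_step {d : ℕ} {x y : Zd d} (h : IsNbr x y) : ∃ p : Fin d × Bool, y = x + stepVec p := by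
  unfold IsNbr at h
  have hex : ∃ i, x i ≠ y i := by
    by_contra hcon
    push Not at hcon
    simp [hcon] at h
  obtain ⟨i, hi⟩ := hex
  have hsplit := Finset.add_sum_erase Finset.univ (fun i => |x i - y i|) (Finset.mem_univ i)
  rw [h] at hsplit
  have hge : 1 ≤ |x i - y i| := Int.one_le_abs (sub_ne_zero.2 hi)
  have hnn : 0 ≤ ∑ j ∈ Finset.univ.erase i, |x j - y j| := Finset.sum_nonneg fun _ _ => abs_nonneg _
  have hz : ∑ j ∈ Finset.univ.erase i, |x j - y j| = 0 := by omega
  have h1 : |x i - y i| = 1 := by omega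
  have hoth : ∀ j, j ≠ i → y j = x j := by
    intro j hj
    have := (Finset.sum_eq_zero_iff_of_nonneg (fun _ _ => abs_nonneg _)).1 hz j (by simp [hj])
    have := abs_eq_zero.1 this
    omega
  rcases (abs_eq (by norm_num : (0:ℤ) ≤ 1)).1 h1 with h2 | h2
  · refine ⟨(i, false), ?_⟩
    funext j
    by_cases hj : j = i
    · subst hj; simp [stepVec]; omega
    · simp [stepVec, hj, hoth j hj]
  · refine ⟨(i, true), ?_⟩
    funext j
    by_cases hj : j = i
    · subst hj; simp [stepVec]; omega
    · simp [stepVec, hj, hoth j hj]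

def cylS {d : ℕ} (k : ℕ) (γ : ℕ → Zd d) : Set (ℕ → Zd d) := {ω | ∀ t ≤ k, ω t = γ t}

lemma nn_null {d : ℕ} (W : SRW d) (z : Zd d) : W.P z {ω | ∀ t, IsNbr (ω t) (ω (t+1))}ᶜ = 0 := by
  have := W.isProb z
  rw [prob_compl_eq_zero_iff]
  · exact W.nn z
  · have : {ω : ℕ → Zd d | ∀ t, IsNbr (ω t) (ω (t+1))} =
        ⋂ t, (fun ω : ℕ → Zd d => (ω t, ω (t+1))) ⁻¹' {q | IsNbr q.1 q.2} := by
      ext ω; simp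
    rw [this]
    refine MeasurableSet.iInter fun t => ?_
    refine ((measurable_pi_apply t).prodMk (measurable_pi_apply (t+1))) ?_
    exact (Set.to_countable _).measurableSet

lemma start_null {d : ℕ} (W : SRW d) (z : Zd d) : W.P z {ω | ω 0 = z}ᶜ = 0 := by
  have := W.isProb z
  rw [prob_compl_eq_zero_iff]
  · exact W.start z
  · have : {ω : ℕ → Zd d | ω 0 = z} = (fun ω : ℕ → Zd d => ω 0) ⁻¹' {z} := by
      ext ω; simp
    rw [this]
    exact measurable_pi_apply 0 (measurableSet_singleton z)

def ext1 {d : ℕ} (k : ℕ) (γ : ℕ → Zd d) (p : Fin d × Bool) : ℕ → Zd d :=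
  Function.update γ (k+1) (γ k + stepVec p)

lemma cyl_step {d : ℕ} (W : SRW d) (z : Zd d) (k : ℕ) (γ : ℕ → Zd d) (E : Set (ℕ → Zd d)) :
    W.P z (cylS k γ ∩ E) ≤ ∑ p : Fin d × Bool, W.P z (cylS (k+1) (ext1 k γ p) ∩ E) := by
  have hsub : cylS k γ ∩ E ⊆ {ω | ∀ t, IsNbr (ω t) (ω (t+1))}ᶜ ∪
      ⋃ p ∈ (Finset.univ : Finset (Fin d × Bool)), (cylS (k+1) (ext1 k γ p) ∩ E) := by
    rintro ω ⟨hω, hE⟩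
    by_cases hn : ∀ t, IsNbr (ω t) (ω (t+1))
    · right
      obtain ⟨p, hp⟩ := exists_step (hn k)
      simp only [Finset.mem_univ, Set.iUnion_true, Set.mem_iUnion]
      refine ⟨p, ?_, hE⟩
      intro t ht
      unfold ext1
      rcases Nat.lt_or_ge t (k+1) with h | h
      · rw [Function.update_of_ne (by omega)]
        exact hω t (by omega)
      · have : t = k + 1 := by omega
        subst this
        rw [Function.update_self, hp, hω k le_rfl]
    · left; exact hn
  refine (measure_mono hsub).trans ((measure_union_le _ _).trans ?_)
  rw [nn_null, zero_add]
  exact measure_biUnion_finset_le _ _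

def okPath {d : ℕ} (z : Zd d) (k : ℕ) (γ : ℕ → Zd d) : Prop :=
  γ 0 = z ∧ ∀ t < k, IsNbr (γ t) (γ (t+1))

lemma ok_ext {d : ℕ} {z : Zd d} {k : ℕ} {γ : ℕ → Zd d} (h : okPath z k γ) (p : Fin d × Bool) :
    okPath z (k+1) (ext1 k γ p) := by
  constructor
  · unfold ext1; rw [Function.update_of_ne (by omega)]; exact h.1
  · intro t ht
    unfold ext1
    rw [Function.update_of_ne (by omega : t ≠ k+1)]
    rcases Nat.lt_or_ge t k with h' | h'
    · rw [Function.update_of_ne (by omega)]; exact h.2 t h'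
    · have : t = k := by omega
      subst this
      rw [Function.update_self]; exact isNbr_step _ _

lemma ext_val {d : ℕ} (k : ℕ) (γ : ℕ → Zd d) (p : Fin d × Bool) :
    ext1 k γ p (k+1) = γ k + stepVec p := by unfold ext1; rw [Function.update_self]

/-- general one-step bound -/
lemma step_bound {d : ℕ} (W : SRW d) (z : Zd d) (k : ℕ) (γ : ℕ → Zd d) (E E' : Set (ℕ → Zd d))
    (u : Zd d → ℝ≥0∞)
    (hE : cylS k γ ∩ E ⊆ E')
    (hu : ∀ p, W.P z (cylS (k+1) (ext1 k γ p) ∩ E') ≤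
      (((2 * d : ℕ) : ℝ≥0∞))⁻¹ ^ (k+1) * u (ext1 k γ p (k+1))) :
    W.P z (cylS k γ ∩ E) ≤ (((2 * d : ℕ) : ℝ≥0∞))⁻¹ ^ k * Av u (γ k) := by
  have h0 : cylS k γ ∩ E ⊆ cylS k γ ∩ E' := fun ω h => ⟨h.1, hE h⟩
  refine (measure_mono h0).trans ((cyl_step W z k γ E').trans ?_)
  refine (Finset.sum_le_sum fun p _ => hu p).trans (le_of_eq ?_)
  rw [← Finset.mul_sum, pow_succ, mul_assoc]
  unfold Av
  simp_rw [ext_val]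

lemma hit_bound {d : ℕ} (W : SRW d) (z : Zd d) (K : Finset (Zd d)) (n : ℕ) :
    ∀ (k : ℕ) (γ : ℕ → Zd d), okPath z k γ →
      W.P z (cylS k γ ∩ {ω | ∃ t ≤ n, ω (k+t) ∈ K}) ≤
        (((2 * d : ℕ) : ℝ≥0∞))⁻¹ ^ k * hitP K n (γ k) := by
  have hin : ∀ n (k : ℕ) (γ : ℕ → Zd d), okPath z k γ → γ k ∈ K →
      W.P z (cylS k γ ∩ {ω | ∃ t ≤ n, ω (k+t) ∈ K}) ≤
        (((2 * d : ℕ) : ℝ≥0∞))⁻¹ ^ k * hitP K n (γ k) := by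
    intro n k γ hok hK
    have : hitP K n (γ k) = 1 := by cases n <;> simp [hitP, onK, hK]
    rw [this, mul_one, ← W.cyl z k γ hok.1 hok.2]
    exact measure_mono Set.inter_subset_left
  induction n with
  | zero =>
    intro k γ hok
    by_cases hK : γ k ∈ K
    · exact hin 0 k γ hok hK
    · have : cylS k γ ∩ {ω | ∃ t ≤ 0, ω (k+t) ∈ K} = ∅ := by
        ext ω
        simp only [Set.mem_inter_iff, Set.mem_ofPred_eq, Set.mem_empty_iff_false, iff_false, not_and]
        rintro hω ⟨t, ht, h⟩
        have : t = 0 := by omega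
        subst this
        rw [add_zero, hω k le_rfl] at h
        exact hK h
      rw [this]; simp
  | succ n ih =>
    intro k γ hok
    by_cases hK : γ k ∈ K
    · exact hin (n+1) k γ hok hK
    · have e : hitP K (n+1) (γ k) = Av (hitP K n) (γ k) := by simp [hitP, hK]
      rw [e]
      refine step_bound W z k γ _ {ω | ∃ t ≤ n, ω (k+1+t) ∈ K} _ ?_ (fun p => ih (k+1) _ (ok_ext hok p))
      rintro ω ⟨hω, t, ht, h⟩
      rcases t with _ | t
      · rw [add_zero, hω k le_rfl] at h; exact absurd h hK
      · exact ⟨t, by omega, by rwa [show k + 1 + t = k + (t+1) by omega]⟩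

lemma both_bound {d : ℕ} (W : SRW d) (z : Zd d) (K₁ K₂ : Finset (Zd d)) (n : ℕ) :
    ∀ (k : ℕ) (γ : ℕ → Zd d), okPath z k γ →
      W.P z (cylS k γ ∩ {ω | (∃ t ≤ n, ω (k+t) ∈ K₁) ∧ (∃ t ≤ n, ω (k+t) ∈ K₂)}) ≤
        (((2 * d : ℕ) : ℝ≥0∞))⁻¹ ^ k * bothP K₁ K₂ n (γ k) := by
  have hin1 : ∀ n (k : ℕ) (γ : ℕ → Zd d), okPath z k γ → γ k ∈ K₁ →
      W.P z (cylS k γ ∩ {ω | (∃ t ≤ n, ω (k+t) ∈ K₁) ∧ (∃ t ≤ n, ω (k+t) ∈ K₂)}) ≤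
        (((2 * d : ℕ) : ℝ≥0∞))⁻¹ ^ k * bothP K₁ K₂ n (γ k) := by
    intro n k γ hok hK
    have : bothP K₁ K₂ n (γ k) = hitP K₂ n (γ k) := by cases n <;> simp [bothP, hK]
    rw [this]
    refine (measure_mono ?_).trans (hit_bound W z K₂ n k γ hok)
    exact fun ω h => ⟨h.1, h.2.2⟩
  have hin2 : ∀ n (k : ℕ) (γ : ℕ → Zd d), okPath z k γ → γ k ∉ K₁ → γ k ∈ K₂ →
      W.P z (cylS k γ ∩ {ω | (∃ t ≤ n, ω (k+t) ∈ K₁) ∧ (∃ t ≤ n, ω (k+t) ∈ K₂)}) ≤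
        (((2 * d : ℕ) : ℝ≥0∞))⁻¹ ^ k * bothP K₁ K₂ n (γ k) := by
    intro n k γ hok hK1 hK
    have : bothP K₁ K₂ n (γ k) = hitP K₁ n (γ k) := by cases n <;> simp [bothP, hK, hK1]
    rw [this]
    refine (measure_mono ?_).trans (hit_bound W z K₁ n k γ hok)
    exact fun ω h => ⟨h.1, h.2.1⟩
  induction n with
  | zero =>
    intro k γ hok
    by_cases hK1 : γ k ∈ K₁
    · exact hin1 0 k γ hok hK1
    · have : cylS k γ ∩ {ω | (∃ t ≤ 0, ω (k+t) ∈ K₁) ∧ (∃ t ≤ 0, ω (k+t) ∈ K₂)} = ∅ := by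
        ext ω
        simp only [Set.mem_inter_iff, Set.mem_ofPred_eq, Set.mem_empty_iff_false, iff_false, not_and]
        rintro hω ⟨t, ht, h⟩
        have : t = 0 := by omega
        subst this
        rw [add_zero, hω k le_rfl] at h
        exact absurd h hK1
      rw [this]; simp
  | succ n ih =>
    intro k γ hok
    by_cases hK1 : γ k ∈ K₁
    · exact hin1 (n+1) k γ hok hK1
    by_cases hK2 : γ k ∈ K₂
    · exact hin2 (n+1) k γ hok hK1 hK2
    · have e : bothP K₁ K₂ (n+1) (γ k) = Av (bothP K₁ K₂ n) (γ k) := by simp [bothP, hK1, hK2]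
      rw [e]
      refine step_bound W z k γ _
        {ω | (∃ t ≤ n, ω (k+1+t) ∈ K₁) ∧ (∃ t ≤ n, ω (k+1+t) ∈ K₂)} _ ?_ (fun p => ih (k+1) _ (ok_ext hok p))
      have sh : ∀ (K : Finset (Zd d)) (ω : ℕ → Zd d), γ k ∉ K → ω ∈ cylS k γ →
          (∃ t ≤ n+1, ω (k+t) ∈ K) → ∃ t ≤ n, ω (k+1+t) ∈ K := by
        rintro K ω hK hω ⟨t, ht, h⟩
        rcases t with _ | t
        · rw [add_zero, hω k le_rfl] at h; exact absurd h hK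
        · exact ⟨t, by omega, by rwa [show k + 1 + t = k + (t+1) by omega]⟩
      rintro ω ⟨hω, h1, h2⟩
      exact ⟨sh K₁ ω hK1 hω h1, sh K₂ ω hK2 hω h2⟩

lemma prob_le_both {d : ℕ} (W : SRW d) (z : Zd d) (K₁ K₂ : Finset (Zd d)) (ℓ : ℕ) :
    W.P z (HitBy (K₁ : Set (Zd d)) ℓ ∩ HitBy (K₂ : Set (Zd d)) ℓ) ≤ bothP K₁ K₂ ℓ z := by
  have h := both_bound W z K₁ K₂ ℓ 0 (fun _ => z) ⟨rfl, by intro t ht; omega⟩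
  rw [pow_zero, one_mul] at h
  refine le_trans ?_ h
  have hsub : HitBy (K₁ : Set (Zd d)) ℓ ∩ HitBy (K₂ : Set (Zd d)) ℓ ⊆ {ω | ω 0 = z}ᶜ ∪
      (cylS 0 (fun _ => z) ∩ {ω | (∃ t ≤ ℓ, ω (0+t) ∈ K₁) ∧ (∃ t ≤ ℓ, ω (0+t) ∈ K₂)}) := by
    rintro ω ⟨h1, h2⟩
    by_cases h0 : ω 0 = z
    · right
      refine ⟨?_, ?_⟩
      · intro t ht
        have : t = 0 := by omega
        subst this; exact h0
      · simpa [HitBy] using And.intro h1 h2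
    · left; exact h0
  refine (measure_mono hsub).trans ((measure_union_le _ _).trans ?_)
  rw [start_null, zero_add]

/-! ### Green function and escape bounds -/

def HE (d : ℕ) (c : ℝ) (x : Zd d) : ℝ≥0∞ := ENNReal.ofReal (hR d c x)

lemma Av_translate {d : ℕ} (f : Zd d → ℝ≥0∞) (w x : Zd d) :
    Av (fun y => f (y - w)) x = Av f (x - w) := by
  unfold Av
  congr 1
  apply Finset.sum_congr rfl; intro p _
  change f (x + stepVec p - w) = _
  rw [show x + stepVec p - w = x - w + stepVec p by abel]

lemma ofReal_twod {d : ℕ} (hd : 3 ≤ d) : ((2 * d : ℕ) : ℝ≥0∞)⁻¹ = ENNReal.ofReal ((2*d : ℝ)⁻¹) := by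
  have : (0:ℝ) < 2 * d := by
    have : (3:ℝ) ≤ d := by exact_mod_cast hd
    linarith
  rw [ENNReal.ofReal_inv_of_pos this, ← ENNReal.ofReal_natCast]
  push_cast; rfl

lemma hR_pos {d : ℕ} {c : ℝ} (hc : 4 ≤ c) (x : Zd d) : 0 < hR d c x := by
  have := sq2_nonneg x
  unfold hR
  exact Real.rpow_pos_of_pos (by linarith) _

lemma Av_HE {d : ℕ} (hd : 3 ≤ d) {c : ℝ} (hc : 4 ≤ c) (x : Zd d) :
    Av (HE d c) x = ENNReal.ofReal ((2*d : ℝ)⁻¹ * ∑ p : Fin d × Bool, hR d c (x + stepVec p)) := by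
  unfold Av HE
  rw [ofReal_twod hd, ENNReal.ofReal_mul (by positivity),
    ENNReal.ofReal_sum_of_nonneg (fun p _ => (hR_pos hc _).le)]

lemma Hsuper {d : ℕ} (hd : 3 ≤ d) : ∃ c : ℝ, 4 ≤ c ∧ ∃ η : ℝ, 0 < η ∧ ∀ x : Zd d,
    Av (HE d c) x + (if x = 0 then ENNReal.ofReal η else 0) ≤ HE d c x := by
  obtain ⟨c, hc, hsup⟩ := superharm hd
  have hd' : (3:ℝ) ≤ d := by exact_mod_cast hd
  have hlt : (1 + c)^(-(((d:ℝ)-2)/2)) < c^(-(((d:ℝ)-2)/2)) :=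
    Real.rpow_lt_rpow_of_neg (by linarith) (by linarith) (by linarith)
  refine ⟨c, hc, c^(-(((d:ℝ)-2)/2)) - (1 + c)^(-(((d:ℝ)-2)/2)), by linarith, ?_⟩
  intro x
  by_cases hx : x = 0
  · subst hx
    have e0 : hR d c 0 = c^(-(((d:ℝ)-2)/2)) := by simp [hR, sq2]
    have e1 : ∀ p : Fin d × Bool, HE d c (0 + stepVec p) = ENNReal.ofReal ((1 + c)^(-(((d:ℝ)-2)/2))) := by
      intro p; unfold HE hR; rw [sq2_step]; simp [sq2]
    have e2 : Av (HE d c) 0 = ENNReal.ofReal ((1 + c)^(-(((d:ℝ)-2)/2))) := by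
      rw [← Av_const hd (ENNReal.ofReal ((1 + c)^(-(((d:ℝ)-2)/2)))) 0]
      exact le_antisymm (Av_mono _ fun p => (e1 p).le) (Av_mono _ fun p => (e1 p).ge)
    rw [e2, if_pos rfl, HE, e0, ← ENNReal.ofReal_add (by positivity) (by linarith)]
    apply ENNReal.ofReal_le_ofReal; linarith
  · rw [if_neg hx, add_zero, Av_HE hd hc]
    apply ENNReal.ofReal_le_ofReal
    have := hsup x
    rw [inv_mul_le_iff₀ (by linarith)]
    exact this

lemma green_bound {d : ℕ} {c η : ℝ}
    (hs : ∀ x : Zd d, Av (HE d c) x + (if x = 0 then ENNReal.ofReal η else 0) ≤ HE d c x)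
    (w y : Zd d) : ENNReal.ofReal η * ∑' t, qP w t y ≤ HE d c (y - w) := by
  have h : ∀ T y, ∑ t ∈ Finset.range T, ENNReal.ofReal η * qP w t y ≤ HE d c (y - w) := by
    intro T
    induction T with
    | zero => intro y; simp
    | succ T ih =>
      intro y
      rw [Finset.sum_range_succ']
      refine le_trans (add_le_add ?_ ?_) (hs (y - w))
      · simp only [qP]
        rw [← Av_translate, ← Finset.mul_sum, ← Av_sum, ← Av_mul]
        apply Av_mono; intro p
        rw [Finset.mul_sum]
        exact ih _
      · simp only [qP, sub_eq_zero]
        split_ifs <;> simp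
  rw [← ENNReal.tsum_mul_left]
  exact ENNReal.tsum_le_of_sum_range_le fun n => h n y

lemma le_supNorm {d : ℕ} (x : Zd d) (i : Fin d) : (x i).natAbs ≤ supNorm x :=
  Finset.le_sup (f := fun i => (x i).natAbs) (Finset.mem_univ i)

lemma supNorm_le {d : ℕ} (x : Zd d) (n : ℕ) (h : ∀ i, (x i).natAbs ≤ n) : supNorm x ≤ n :=
  Finset.sup_le fun i _ => h i

lemma exists_supNorm {d : ℕ} (hd : 3 ≤ d) (x : Zd d) : ∃ i, supNorm x = (x i).natAbs := by
  have : Nonempty (Fin d) := ⟨⟨0, by omega⟩⟩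
  obtain ⟨i, _, hi⟩ := Finset.exists_mem_eq_sup (Finset.univ : Finset (Fin d)) Finset.univ_nonempty
    (fun i => (x i).natAbs)
  exact ⟨i, hi⟩

lemma supNorm_sub_le {d : ℕ} (x y : Zd d) : supNorm (x - y) ≤ supNorm x + supNorm y := by
  apply supNorm_le; intro i
  have h1 := le_supNorm x i
  have h2 := le_supNorm y i
  have : (x - y) i = x i - y i := rfl
  rw [this]; omega

lemma supNorm_step {d : ℕ} (x : Zd d) (p : Fin d × Bool) : supNorm (x + stepVec p) ≤ supNorm x + 1 := by
  apply supNorm_le; intro i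
  have h1 := le_supNorm x i
  have h2 : (stepVec p i).natAbs ≤ 1 := by
    unfold stepVec; split_ifs <;> simp
  have : (x + stepVec p) i = x i + stepVec p i := rfl
  rw [this]; omega

lemma natAbs_sq_real (a : ℤ) : (a : ℝ)^2 = ((a.natAbs : ℕ) : ℝ)^2 := by
  rw [Nat.cast_natAbs, Int.cast_abs, sq_abs]

lemma supNorm_sq_le {d : ℕ} (hd : 3 ≤ d) (x : Zd d) : (supNorm x : ℝ)^2 ≤ sq2 x := by
  obtain ⟨i, hi⟩ := exists_supNorm hd x
  rw [hi, ← natAbs_sq_real]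
  exact Finset.single_le_sum (f := fun i => (x i : ℝ)^2) (fun _ _ => sq_nonneg _) (Finset.mem_univ i)

lemma sq2_le {d : ℕ} (x : Zd d) (n : ℕ) (h : supNorm x ≤ n) : sq2 x ≤ d * (n:ℝ)^2 := by
  unfold sq2
  calc ∑ i, (x i : ℝ)^2 ≤ ∑ _i : Fin d, (n:ℝ)^2 := by
        apply Finset.sum_le_sum; intro i _
        rw [natAbs_sq_real]
        have : ((x i).natAbs : ℝ) ≤ n := by exact_mod_cast (le_supNorm x i).trans h
        gcongr
    _ = d * (n:ℝ)^2 := by simp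

lemma HE_le {d : ℕ} (hd : 3 ≤ d) {c : ℝ} (hc : 4 ≤ c) (y : Zd d) (X : ℕ) (hX : 1 ≤ X)
    (h : 4 * X ≤ 10 * supNorm y) :
    HE d c y ≤ ENNReal.ofReal ((4/10 : ℝ)^(-((d:ℝ)-2))) * (X : ℝ≥0∞)^((2:ℤ) - d) := by
  have hd' : (3:ℝ) ≤ d := by exact_mod_cast hd
  have hX' : (0:ℝ) < X := by exact_mod_cast hX
  have e1 : (X : ℝ≥0∞)^((2:ℤ) - d) = ENNReal.ofReal ((X:ℝ)^(-((d:ℝ)-2))) := by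
    rw [← ENNReal.rpow_intCast, ← ENNReal.ofReal_natCast, ENNReal.ofReal_rpow_of_pos hX']
    congr 2; push_cast; ring
  rw [e1, ← ENNReal.ofReal_mul (by positivity), ← Real.mul_rpow (by norm_num) hX'.le]
  apply ENNReal.ofReal_le_ofReal
  unfold hR
  have e2 : (4/10 * (X:ℝ))^(-((d:ℝ)-2)) = ((4/10 * (X:ℝ))^2)^(-(((d:ℝ)-2)/2)) := by
    rw [← Real.rpow_natCast (4/10 * (X:ℝ)) 2, ← Real.rpow_mul (by positivity)]
    congr 1; push_cast; ring
  rw [e2]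
  apply Real.rpow_le_rpow_of_nonpos (by positivity) _ (by linarith)
  have h1 := supNorm_sq_le hd y
  have h2 : 4/10 * (X:ℝ) ≤ supNorm y := by
    have : (4:ℝ) * X ≤ 10 * supNorm y := by exact_mod_cast h
    linarith
  have h3 : (4/10 * (X:ℝ))^2 ≤ (supNorm y : ℝ)^2 := by gcongr
  linarith

lemma hit_cap {d : ℕ} (hd : 3 ≤ d) : ∃ C : ℝ≥0∞, C ≠ ⊤ ∧ ∀ (K : Finset (Zd d)) (y : Zd d) (X n : ℕ),
    1 ≤ X → (∀ w ∈ K, 4 * X ≤ 10 * supNorm (y - w)) →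
      hitP K n y ≤ C * (X : ℝ≥0∞)^((2:ℤ) - d) * cap K := by
  obtain ⟨c, hc, η, hη, hs⟩ := Hsuper hd
  have hη0 : ENNReal.ofReal η ≠ 0 := by simpa using hη
  refine ⟨(ENNReal.ofReal η)⁻¹ * ENNReal.ofReal ((4/10 : ℝ)^(-((d:ℝ)-2))),
    ENNReal.mul_ne_top (ENNReal.inv_ne_top.2 hη0) ENNReal.ofReal_ne_top, ?_⟩
  intro K y X n hX hK
  have hg : ∀ w, ∑' t, qP w t y ≤ (ENNReal.ofReal η)⁻¹ * HE d c (y - w) := by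
    intro w
    rw [← ENNReal.mul_le_iff_le_inv hη0 ENNReal.ofReal_ne_top]
    exact green_bound hs w y
  refine (hit_le hd K y n ?_).trans ?_
  · intro w _
    exact ne_top_of_le_ne_top (ENNReal.mul_ne_top (ENNReal.inv_ne_top.2 hη0) ENNReal.ofReal_ne_top) (hg w)
  · unfold cap
    rw [Finset.mul_sum]
    apply Finset.sum_le_sum; intro w hw
    gcongr
    refine (hg w).trans ?_
    rw [mul_assoc]
    gcongr
    exact HE_le hd hc _ X hX (hK w hw)

lemma esc_far {d : ℕ} (hd : 3 ≤ d) : ∃ M : ℕ, 4 ≤ M ∧ ∀ (r : ℕ) (x₀ : Zd d) (K : Finset (Zd d)),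
    1 ≤ r → (∀ u ∈ K, supNorm (u - x₀) ≤ 3 * r) → ∀ (m : ℕ) (y : Zd d), M * r ≤ supNorm (y - x₀) →
      2⁻¹ ≤ aP K m y := by
  obtain ⟨c, hc, η, hη, hs⟩ := Hsuper hd
  have hd' : (3:ℝ) ≤ d := by exact_mod_cast hd
  obtain ⟨M, hM⟩ := exists_nat_ge (36*d + 4*c : ℝ)
  have hM4 : 4 ≤ M := by
    have : (4:ℝ) ≤ M := by linarith
    exact_mod_cast this
  refine ⟨M, hM4, ?_⟩
  intro r x₀ K hr hK m y hy
  have hr' : (1:ℝ) ≤ r := by exact_mod_cast hr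
  set p : ℝ := ((d:ℝ)-2)/2 with hp
  have hp0 : 1/2 ≤ p := by rw [hp]; linarith
  set T : ℝ := d * ((3 * r : ℕ):ℝ)^2 + c with hT
  have hT0 : 0 < T := by positivity
  have main : ∀ m y, 1 ≤ kill K (aP K m) y + ENNReal.ofReal (T^p) * HE d c (y - x₀) := by
    intro m
    have inK : ∀ m, ∀ y ∈ K, 1 ≤ kill K (aP K m) y + ENNReal.ofReal (T^p) * HE d c (y - x₀) := by
      intro m y hy
      refine le_trans ?_ (le_add_left le_rfl)
      unfold HE
      rw [← ENNReal.ofReal_mul (by positivity), ← ENNReal.ofReal_one]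
      apply ENNReal.ofReal_le_ofReal
      have h1 := sq2_le _ _ (hK y hy)
      have h2 := sq2_nonneg (y - x₀)
      have h3 : T^(-p) ≤ hR d c (y - x₀) := by
        unfold hR
        apply Real.rpow_le_rpow_of_nonpos (by linarith) (by linarith) (by linarith)
      calc (1:ℝ) = T^p * T^(-p) := by rw [← Real.rpow_add hT0]; simp
        _ ≤ _ := by gcongr
    induction m with
    | zero =>
      intro y
      by_cases h : y ∈ K
      · exact inK 0 y h
      · simp [kill, h, aP]
    | succ m ih =>
      intro y
      by_cases h : y ∈ K
      · exact inK (m+1) y h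
      · have e : kill K (aP K (m+1)) y = Av (kill K (aP K m)) y := by simp [kill, h, aP]
        have h2 : Av (fun y => HE d c (y - x₀)) y ≤ HE d c (y - x₀) := by
          rw [Av_translate]; exact le_trans (le_add_right le_rfl) (hs _)
        calc (1:ℝ≥0∞) = Av (fun _ => 1) y := (Av_const hd 1 y).symm
          _ ≤ Av (fun y => kill K (aP K m) y + ENNReal.ofReal (T^p) * HE d c (y - x₀)) y :=
              Av_mono y fun p => ih _
          _ = Av (kill K (aP K m)) y + ENNReal.ofReal (T^p) * Av (fun y => HE d c (y - x₀)) y := by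
              rw [Av_add, Av_mul]
          _ ≤ _ := by rw [e]; gcongr
  have hyK : y ∉ K := by
    intro h
    have := hK y h
    have : 4 * r ≤ M * r := Nat.mul_le_mul_right r hM4
    omega
  have h1 := main m y
  simp only [kill, hyK, if_false] at h1
  have h2 : ENNReal.ofReal (T^p) * HE d c (y - x₀) ≤ 2⁻¹ := by
    unfold HE
    rw [← ENNReal.ofReal_mul (by positivity)]
    have : (2⁻¹ : ℝ≥0∞) = ENNReal.ofReal (2⁻¹ : ℝ) := by
      rw [ENNReal.ofReal_inv_of_pos (by norm_num)]; simp
    rw [this]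
    apply ENNReal.ofReal_le_ofReal
    have h3 : 4 * T ≤ sq2 (y - x₀) + c := by
      have h4 := supNorm_sq_le hd (y - x₀)
      have h5 : ((M:ℝ) * r) ≤ supNorm (y - x₀) := by exact_mod_cast hy
      have h6 : ((M:ℝ) * r)^2 ≤ (supNorm (y - x₀) : ℝ)^2 := by gcongr
      have h7 : (36*d + 4*c : ℝ) ≤ (M:ℝ)^2 := by
        have : (4:ℝ) ≤ M := by exact_mod_cast hM4
        nlinarith
      have h8 : (36*d + 4*c : ℝ) * r^2 ≤ (M:ℝ)^2 * r^2 := by gcongr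
      have h9 : c ≤ c * r^2 := le_mul_of_one_le_right (by linarith) (one_le_pow₀ hr')
      rw [hT]; push_cast; nlinarith
    have h10 : hR d c (y - x₀) ≤ (4*T)^(-p) := by
      unfold hR
      exact Real.rpow_le_rpow_of_nonpos (by positivity) h3 (by linarith)
    have h11 : (4:ℝ)^(-p) ≤ 2⁻¹ := by
      calc (4:ℝ)^(-p) ≤ (4:ℝ)^(-(1/2):ℝ) :=
            Real.rpow_le_rpow_of_exponent_le (by norm_num) (by linarith)
        _ = 2⁻¹ := by
            rw [Real.rpow_neg (by norm_num), ← Real.sqrt_eq_rpow,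
              show (4:ℝ) = 2^2 by norm_num, Real.sqrt_sq (by norm_num)]
    calc T^p * hR d c (y - x₀) ≤ T^p * (4*T)^(-p) := by gcongr
      _ = (4:ℝ)^(-p) * (T^p * T^(-p)) := by rw [Real.mul_rpow (by norm_num) hT0.le]; ring
      _ = (4:ℝ)^(-p) := by rw [← Real.rpow_add hT0]; simp
      _ ≤ 2⁻¹ := h11
  have h3 : (1:ℝ≥0∞) ≤ aP K m y + 2⁻¹ := h1.trans (by gcongr)
  calc (2⁻¹ : ℝ≥0∞) = 1 - 2⁻¹ := ENNReal.one_sub_inv_two.symm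
    _ ≤ aP K m y := tsub_le_iff_right.2 h3

lemma esc_near {d : ℕ} (hd : 3 ≤ d) : ∃ c₀ : ℝ≥0∞, c₀ ≠ 0 ∧ c₀ ≠ ⊤ ∧
    ∀ (r : ℕ) (x₀ : Zd d) (K : Finset (Zd d)),
    1 ≤ r → (∀ u ∈ K, supNorm (u - x₀) ≤ 3 * r) → ∀ (m : ℕ) (z : Zd d), 4 * r ≤ supNorm (z - x₀) →
      c₀ ≤ aP K m z := by
  obtain ⟨M, hM4, hfar⟩ := esc_far hd
  have hM' : (4:ℝ) ≤ M := by exact_mod_cast hM4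
  refine ⟨ENNReal.ofReal (1/(2*M)), ?_, ENNReal.ofReal_ne_top, ?_⟩
  · rw [ne_eq, ENNReal.ofReal_eq_zero, not_le]; positivity
  intro r x₀ K hr hK m z hz
  have hr' : (1:ℝ) ≤ r := by exact_mod_cast hr
  have half : (2⁻¹ : ℝ≥0∞) = ENNReal.ofReal (2⁻¹ : ℝ) := by
    rw [ENNReal.ofReal_inv_of_pos (by norm_num)]; simp
  by_cases hzM : M * r ≤ supNorm (z - x₀)
  · refine le_trans ?_ (hfar r x₀ K hr hK m z hzM)
    rw [half]
    apply ENNReal.ofReal_le_ofReal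
    rw [one_div]; gcongr; linarith
  push Not at hzM
  obtain ⟨i, hi⟩ := exists_supNorm hd (z - x₀)
  obtain ⟨σ, hσ, hσz⟩ : ∃ σ : ℤ, σ.natAbs = 1 ∧ σ * (z - x₀) i = supNorm (z - x₀) := by
    rcases le_total 0 ((z - x₀) i) with h | h
    · exact ⟨1, by norm_num, by rw [hi]; omega⟩
    · exact ⟨-1, by norm_num, by rw [hi]; omega⟩
  have hσle : ∀ y : Zd d, σ * (y - x₀) i ≤ supNorm (y - x₀) := by
    intro y
    have h1 := le_supNorm (y - x₀) i
    rcases Int.natAbs_eq σ with h | h <;> rw [hσ] at h <;> rw [h] <;> push_cast <;> omega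
  let u : Zd d → ℝ := fun y => (((σ * (y - x₀) i : ℤ) : ℝ) - 3 * r) / (2 * M * r)
  have u_le : ∀ y (n : ℕ), supNorm (y - x₀) ≤ n * r → u y ≤ ((n:ℝ) - 3) / (2 * M) := by
    intro y n hy
    have h1 : ((σ * (y - x₀) i : ℤ) : ℝ) ≤ n * r := by
      have : σ * (y - x₀) i ≤ ((n * r : ℕ) : ℤ) := (hσle y).trans (by exact_mod_cast hy)
      exact_mod_cast this
    simp only [u]
    rw [div_le_div_iff₀ (by positivity) (by positivity)]
    have : ((σ * (y - x₀) i : ℤ) : ℝ) - 3 * r ≤ (n - 3) * r := by linarith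
    have := mul_le_mul_of_nonneg_right this (by positivity : (0:ℝ) ≤ 2 * M)
    linarith
  have u_half : ∀ y, supNorm (y - x₀) ≤ M * r → u y ≤ 2⁻¹ := by
    intro y hy
    refine (u_le y M hy).trans ?_
    rw [div_le_iff₀ (by positivity)]; linarith
  have u_harm : ∀ y, ENNReal.ofReal (u y) ≤ Av (fun y => ENNReal.ofReal (u y)) y := by
    intro y
    have hsum : ∑ p : Fin d × Bool, u (y + stepVec p) = (2 * d) * u y := by
      rw [Fintype.sum_prod_type]
      have : ∀ j : Fin d, ∑ b : Bool, u (y + stepVec (j, b)) = 2 * u y := by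
        intro j
        simp only [Fintype.sum_bool, u, stepVec, Pi.add_apply, Pi.sub_apply]
        by_cases hij : i = j
        · simp [hij]; ring
        · simp [hij]; ring
      rw [Finset.sum_congr rfl fun j _ => this j]; simp; ring
    have hd0 : (0:ℝ) < 2 * d := by
      have : (3:ℝ) ≤ d := by exact_mod_cast hd
      linarith
    have : u y = (2 * d : ℝ)⁻¹ * ∑ p : Fin d × Bool, u (y + stepVec p) := by
      rw [hsum, inv_mul_cancel_left₀ hd0.ne']
    rw [this, ENNReal.ofReal_mul (by positivity), ← ofReal_twod hd]
    unfold Av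
    gcongr
    exact Finset.le_sum_of_subadditive ENNReal.ofReal ENNReal.ofReal_zero.le
      (fun _ _ => ENNReal.ofReal_add_le) _ _
  have main : ∀ m y, supNorm (y - x₀) ≤ M * r → ENNReal.ofReal (u y) ≤ kill K (aP K m) y := by
    have inK : ∀ m, ∀ y ∈ K, ENNReal.ofReal (u y) ≤ kill K (aP K m) y := by
      intro m y hy
      have := u_le y 3 (hK y hy)
      rw [ENNReal.ofReal_of_nonpos (by simpa using this)]
      exact zero_le
    intro m
    induction m with
    | zero =>
      intro y hy
      by_cases h : y ∈ K
      · exact inK 0 y h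
      · simp only [kill, h, if_false, aP]
        rw [← ENNReal.ofReal_one]
        exact ENNReal.ofReal_le_ofReal ((u_half y hy).trans (by norm_num))
    | succ m ih =>
      intro y hy
      by_cases h : y ∈ K
      · exact inK (m+1) y h
      · simp only [kill, h, if_false]
        by_cases hyM : M * r ≤ supNorm (y - x₀)
        · refine le_trans ?_ (hfar r x₀ K hr hK (m+1) y hyM)
          rw [half]
          exact ENNReal.ofReal_le_ofReal (u_half y hy)
        · refine (u_harm y).trans ?_
          simp only [aP]
          apply Av_mono; intro p
          apply ih
          have := supNorm_step (y - x₀) p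
          rw [show y + stepVec p - x₀ = y - x₀ + stepVec p by abel]
          omega
  have hzK : z ∉ K := by
    intro h
    have := hK z h
    omega
  have hfin := main m z hzM.le
  simp only [kill, hzK, if_false] at hfin
  refine le_trans (ENNReal.ofReal_le_ofReal ?_) hfin
  simp only [u]
  rw [hσz]
  have : (4:ℝ) * r ≤ ((supNorm (z - x₀) : ℤ) : ℝ) := by exact_mod_cast hz
  rw [div_le_div_iff₀ (by positivity) (by positivity)]
  nlinarith

/-- The sum of hitting probabilities bound. -/
lemma sum_hit_bound {d : ℕ} (hd : 3 ≤ d) : ∃ C : ℝ≥0∞, C ≠ ⊤ ∧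
    ∀ (r ℓ : ℕ) (x₀ : Zd d) (K : Finset (Zd d)) (S : Set (Zd d)),
    1 ≤ r → 1 ≤ ℓ → (∀ u ∈ K, supNorm (u - x₀) ≤ 3 * r) → (∀ z ∈ S, 4 * r ≤ supNorm (z - x₀)) →
      ∑' z : S, hitP K ℓ z.1 ≤ C * ℓ * cap K := by
  obtain ⟨c₀, h0, htop, hesc⟩ := esc_near hd
  refine ⟨c₀⁻¹ * 2, ENNReal.mul_ne_top (ENNReal.inv_ne_top.2 h0) (by simp), ?_⟩
  intro r ℓ x₀ K S hr hℓ hK hS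
  let φ : Zd d → ℝ≥0∞ := S.indicator 1
  have h1 := sum_hit hd K φ c₀ (by
    intro x m
    by_cases hx : x ∈ S
    · simpa [φ, hx] using hesc r x₀ K hr hK m x (hS x hx)
    · simp [φ, hx]) ℓ
  have h2 : ∑' z : S, hitP K ℓ z.1 ≤ ∑' x, φ x * hitP K ℓ x := by
    rw [tsum_subtype S (hitP K ℓ)]
    apply ENNReal.tsum_le_tsum; intro x
    by_cases hx : x ∈ S <;> simp [φ, hx]
  refine h2.trans ?_
  rw [ENNReal.mul_le_iff_le_inv h0 htop] at h1
  refine h1.trans ?_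
  rw [show c₀⁻¹ * 2 * (ℓ : ℝ≥0∞) * cap K = c₀⁻¹ * ((2 * ℓ) * cap K) by ring]
  gcongr
  have : ((ℓ + 1 : ℕ) : ℝ≥0∞) ≤ ((2 * ℓ : ℕ) : ℝ≥0∞) := by exact_mod_cast (by omega : ℓ + 1 ≤ 2 * ℓ)
  push_cast at this
  exact this

theorem sum_double_hitting_upper_bound {d : ℕ} (hd : 3 ≤ d) :
    ∃ C : ℝ≥0∞, C ≠ ⊤ ∧ ∀ (W : SRW d) (r ℓ : ℕ) (x : Zd d) (K₁ K₂ : Finset (Zd d)),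
      1 ≤ r → 10 * r ≤ supNorm x →
      (∀ u ∈ K₁, supNorm u ≤ 3 * r) → (∀ u ∈ K₂, supNorm (u - x) ≤ 3 * r) →
      16 * r ^ 2 ≤ ℓ →
      ∑' z : {z : Zd d // 4 * r ≤ supNorm z ∧ 4 * r ≤ supNorm (z - x)},
          W.P z.1 (HitBy (K₁ : Set (Zd d)) ℓ ∩ HitBy (K₂ : Set (Zd d)) ℓ)
        ≤ C * ℓ * cap K₁ * cap K₂ * ((supNorm x : ℝ≥0∞)) ^ ((2 : ℤ) - d) := by
  obtain ⟨C₁, hC₁, hhit⟩ := hit_cap hd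
  obtain ⟨C₂, hC₂, hsum⟩ := sum_hit_bound hd
  refine ⟨2 * (C₁ * C₂), ENNReal.mul_ne_top (by simp) (ENNReal.mul_ne_top hC₁ hC₂), ?_⟩
  intro W r ℓ x K₁ K₂ hr hx hK₁ hK₂ hℓ
  have hℓ1 : 1 ≤ ℓ := by nlinarith
  have hdist : ∀ y ∈ K₁, ∀ w ∈ K₂, 4 * supNorm x ≤ 10 * supNorm (y - w) := by
    intro y hy w hw
    have h1 := hK₁ y hy
    have h2 := hK₂ w hw
    have h3 := supNorm_sub_le (y - (y - w)) (w - x)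
    have h4 := supNorm_sub_le y (y - w)
    rw [show y - (y - w) - (w - x) = x by abel] at h3
    omega
  have hdist' : ∀ y ∈ K₂, ∀ w ∈ K₁, 4 * supNorm x ≤ 10 * supNorm (y - w) := by
    intro y hy w hw
    have h1 := hdist w hw y hy
    have h2 : supNorm (w - y) ≤ supNorm (y - w) := by
      have := supNorm_sub_le 0 (y - w)
      rw [show (0 : Zd d) - (y - w) = w - y by abel] at this
      have h0 : supNorm (0 : Zd d) ≤ 0 := supNorm_le _ _ (by simp)
      omega
    omega
  set X : ℝ≥0∞ := ((supNorm x : ℝ≥0∞)) ^ ((2 : ℤ) - d) with hX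
  set S : Set (Zd d) := {z | 4 * r ≤ supNorm z ∧ 4 * r ≤ supNorm (z - x)} with hS
  have key : ∀ z : S, W.P z.1 (HitBy (K₁ : Set (Zd d)) ℓ ∩ HitBy (K₂ : Set (Zd d)) ℓ) ≤
      (C₁ * X * cap K₂) * hitP K₁ ℓ z.1 + (C₁ * X * cap K₁) * hitP K₂ ℓ z.1 := by
    intro z
    refine (prob_le_both W z.1 K₁ K₂ ℓ).trans (both_le K₁ K₂ _ _ ?_ ?_ ℓ z.1)
    · intro y hy n
      exact hhit K₂ y (supNorm x) n (by omega) (hdist y hy)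
    · intro y hy n
      exact hhit K₁ y (supNorm x) n (by omega) (hdist' y hy)
  have s1 := hsum r ℓ 0 K₁ S hr hℓ1 (by simpa using hK₁) (by intro z hz; simpa using hz.1)
  have s2 := hsum r ℓ x K₂ S hr hℓ1 hK₂ (fun z hz => hz.2)
  calc ∑' z : S, W.P z.1 (HitBy (K₁ : Set (Zd d)) ℓ ∩ HitBy (K₂ : Set (Zd d)) ℓ)
      ≤ ∑' z : S, ((C₁ * X * cap K₂) * hitP K₁ ℓ z.1 + (C₁ * X * cap K₁) * hitP K₂ ℓ z.1) :=
        ENNReal.tsum_le_tsum key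
    _ = (C₁ * X * cap K₂) * ∑' z : S, hitP K₁ ℓ z.1 + (C₁ * X * cap K₁) * ∑' z : S, hitP K₂ ℓ z.1 := by
        rw [ENNReal.tsum_add, ENNReal.tsum_mul_left, ENNReal.tsum_mul_left]
    _ ≤ (C₁ * X * cap K₂) * (C₂ * ℓ * cap K₁) + (C₁ * X * cap K₁) * (C₂ * ℓ * cap K₂) := by
        gcongr
    _ = 2 * (C₁ * C₂) * ℓ * cap K₁ * cap K₂ * X := by ring

end
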